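/- arXiv:2107.14268 — 3 statements merged into one kernel-verified Lean document; each statement's English description precedes it below -/
import Mathlib

section
/- Let K ∈ 𝓚 be a virtual transition matrix and let M ∈ ℕ₀. Then there exists a unique virtual distribution ν = (ν_N)_{N∈ℕ} ∈ 𝓓₁(K) such that ν_N is the point mass at M for every N ∈ ℕ with N ≥ M. -/
/-- `K` is a row-stochastic matrix on ℕ₀ = {0,1,2,...}. -/
def IsStochastic (K : ℕ → ℕ → ℝ) : Prop :=
  (∀ a b, 0 ≤ K a b) ∧ ∀ a, HasSum (K a) 1

/-- Membership in 𝒦_N: row-stochastic with `K a a = 1` for all `a ∉ {1,...,N}`. -/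
def MemKN (N : ℕ) (K : ℕ → ℕ → ℝ) : Prop :=
  IsStochastic K ∧ ∀ a : ℕ, ¬(1 ≤ a ∧ a ≤ N) → K a a = 1

/-- The projection P_N : 𝒦_{N+1} → 𝒦_N on transition matrices. -/
noncomputable def projK (N : ℕ) (K : ℕ → ℕ → ℝ) : ℕ → ℕ → ℝ := fun a b =>
  if 1 ≤ a ∧ a ≤ N then
    (if b ≤ N then
      (if K (N + 1) (N + 1) < 1 then
        K a b + K a (N + 1) * K (N + 1) b / (1 - K (N + 1) (N + 1))
      else if b = 0 then K a 0 + K a (N + 1)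
      else K a b)
    else 0)
  else if a = b then 1 else 0

/-- Membership in the space 𝓚 of virtual transition matrices (indexed by ℕ = {1,2,...}
as `ℕ+`). -/
def MemVTM (K : ℕ+ → ℕ → ℕ → ℝ) : Prop :=
  (∀ N : ℕ+, MemKN N (K N)) ∧ ∀ N : ℕ+, projK N (K (N + 1)) = K N

/-- The constants C^K_{N,a} (with `C^K_{0,0} = 0` by convention). -/
noncomputable def Ccoef (K : ℕ+ → ℕ → ℕ → ℝ) (N a : ℕ) : ℝ :=
  if N = 0 then 0
  else if K N.succPNat (N + 1) (N + 1) < 1 then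
    K N.succPNat (N + 1) a / (1 - K N.succPNat (N + 1) (N + 1))
  else if a = 0 then 1 else 0

/-- Compatibility of a virtual distribution with a virtual transition matrix:
ν_N(a) = ν_{N+1}(a) + ν_{N+1}(N+1)·C^K_{N,a} for all N and all a ∈ {0,...,N}. -/
def Compatible (ν : ℕ+ → ℕ → ℝ) (K : ℕ+ → ℕ → ℕ → ℝ) : Prop :=
  ∀ (N : ℕ+) (a : ℕ), a ≤ (N : ℕ) →
    ν N a = ν (N + 1) a + ν (N + 1) ((N : ℕ) + 1) * Ccoef K (N : ℕ) a

/-- Membership in the space 𝓓₁ of virtual distributions: a sequence of probability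
measures ν_N on {0,...,N} (identified with their vectors of point masses, extended by 0)
with ν_N(a) ≥ ν_{N+1}(a) for a ∈ {0,...,N}. -/
def MemD1 (ν : ℕ+ → ℕ → ℝ) : Prop :=
  (∀ (N : ℕ+) (a : ℕ), 0 ≤ ν N a) ∧
  (∀ N : ℕ+, ∑ a ∈ Finset.range ((N : ℕ) + 1), ν N a = 1) ∧
  (∀ (N : ℕ+) (a : ℕ), (N : ℕ) < a → ν N a = 0) ∧
  (∀ (N : ℕ+) (a : ℕ), a ≤ (N : ℕ) → ν (N + 1) a ≤ ν N a)

/-- 𝓓₁(K): the set of virtual distributions compatible with `K`. -/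
def D1K (K : ℕ+ → ℕ → ℕ → ℝ) : Set (ℕ+ → ℕ → ℝ) :=
  {ν | MemD1 ν ∧ Compatible ν K}

theorem Ccoef_nonneg_aux (K : ℕ+ → ℕ → ℕ → ℝ) (hK : MemVTM K) (N a : ℕ) : 0 ≤ Ccoef K N a := by
  unfold Ccoef
  split_ifs with h1 h2 h3
  · exact le_rfl
  · exact div_nonneg ((hK.1 _).1.1 _ _) (by linarith)
  · exact zero_le_one
  · exact le_rfl

theorem Ccoef_sum_aux (K : ℕ+ → ℕ → ℕ → ℝ) (hK : MemVTM K) (N : ℕ) (hN : N ≠ 0) :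
    ∑ a ∈ Finset.range (N + 1), Ccoef K N a = 1 := by
  unfold Ccoef
  simp only [hN, if_false]
  split_ifs with h2
  · have hz : ∀ b ∉ Finset.range (N + 1 + 1), K N.succPNat (N + 1) b = 0 := by
      intro b hb
      rw [← hK.2 N.succPNat]
      simp only [Finset.mem_range] at hb
      have h3 : ¬ b ≤ N + 1 := by omega
      simp [projK, h3]
    have hs := ((hK.1 N.succPNat).1.2 (N + 1)).unique (hasSum_sum_of_ne_finset_zero hz)
    rw [Finset.sum_range_succ] at hs
    rw [← Finset.sum_div]
    rw [div_eq_one_iff_eq (by linarith)]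
    linarith
  · simp

/-- the distribution at level `M - j`. -/
noncomputable def gaux (K : ℕ+ → ℕ → ℕ → ℝ) (M : ℕ) : ℕ → ℕ → ℝ
  | 0 => fun a => if a = M then 1 else 0
  | (j + 1) => fun a => if a ≤ M - (j + 1) then
      gaux K M j a + gaux K M j (M - j) * Ccoef K (M - (j + 1)) a else 0

theorem gaux_zero_of (K : ℕ+ → ℕ → ℕ → ℝ) (M N : ℕ) (h : M ≤ N) (a : ℕ) :
    gaux K M (M - N) a = if a = M then 1 else 0 := by
  rw [Nat.sub_eq_zero_of_le h]; rfl

theorem gaux_step (K : ℕ+ → ℕ → ℕ → ℝ) (M N : ℕ) (h : N < M) (a : ℕ) :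
    gaux K M (M - N) a = if a ≤ N then gaux K M (M - (N + 1)) a +
      gaux K M (M - (N + 1)) (N + 1) * Ccoef K N a else 0 := by
  obtain ⟨j, rfl⟩ : ∃ j, M = N + 1 + j := ⟨M - (N + 1), by omega⟩
  have e1 : N + 1 + j - N = j + 1 := by omega
  have e2 : N + 1 + j - (N + 1) = j := by omega
  have e3 : N + 1 + j - (j + 1) = N := by omega
  have e4 : N + 1 + j - j = N + 1 := by omega
  rw [e1, e2, gaux, e3, e4]

theorem gaux_compat (K : ℕ+ → ℕ → ℕ → ℝ) (M N : ℕ) (a : ℕ) (ha : a ≤ N) :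
    gaux K M (M - N) a = gaux K M (M - (N + 1)) a +
      gaux K M (M - (N + 1)) (N + 1) * Ccoef K N a := by
  rcases Nat.lt_or_ge N M with h | h
  · rw [gaux_step K M N h, if_pos ha]
  · rw [gaux_zero_of K M N h, gaux_zero_of K M (N + 1) (by omega),
      gaux_zero_of K M (N + 1) (by omega), if_neg (show ¬ N + 1 = M by omega)]
    ring

theorem gaux_nonneg (K : ℕ+ → ℕ → ℕ → ℝ) (hK : MemVTM K) (M j : ℕ) (a : ℕ) :
    0 ≤ gaux K M j a := by
  induction j generalizing a with
  | zero => simp only [gaux]; split_ifs <;> norm_num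
  | succ j ih =>
    simp only [gaux]
    split_ifs
    · exact add_nonneg (ih a) (mul_nonneg (ih _) (Ccoef_nonneg_aux K hK _ _))
    · exact le_rfl

theorem gaux_support (K : ℕ+ → ℕ → ℕ → ℝ) (M N a : ℕ) (h : N < a) :
    gaux K M (M - N) a = 0 := by
  rcases Nat.lt_or_ge N M with h' | h'
  · rw [gaux_step K M N h', if_neg (by omega)]
  · rw [gaux_zero_of K M N h', if_neg (by omega)]

theorem gaux_sum (K : ℕ+ → ℕ → ℕ → ℝ) (hK : MemVTM K) (M d : ℕ) : ∀ N : ℕ, N ≠ 0 → M ≤ N + d →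
    ∑ a ∈ Finset.range (N + 1), gaux K M (M - N) a = 1 := by
  induction d with
  | zero =>
    intro N _ h
    rw [Finset.sum_congr rfl (fun a _ => gaux_zero_of K M N h a)]
    simp [Nat.lt_succ_of_le h]
  | succ d ih =>
    intro N hN h
    have := ih (N + 1) (by omega) (by omega)
    rw [Finset.sum_range_succ] at this
    rw [Finset.sum_congr rfl (fun a ha => gaux_compat K M N a
      (by have := Finset.mem_range.1 ha; omega)), Finset.sum_add_distrib, ← Finset.mul_sum,
      Ccoef_sum_aux K hK N hN]
    linarith

/-- For every virtual transition matrix K and every M ∈ ℕ₀ there is a unique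
ν ∈ 𝓓₁(K) with ν_N the point mass at M for every N ≥ M. -/
theorem exists_unique_deltaK (K : ℕ+ → ℕ → ℕ → ℝ) (hK : MemVTM K) (M : ℕ) :
    ∃! ν : ℕ+ → ℕ → ℝ, ν ∈ D1K K ∧
      ∀ N : ℕ+, M ≤ (N : ℕ) → ∀ a : ℕ, ν N a = if a = M then 1 else 0 := by
  refine ⟨fun N => gaux K M (M - (N : ℕ)), ⟨⟨⟨?_, ?_, ?_, ?_⟩, ?_⟩, ?_⟩, ?_⟩
  · intro N a
    exact gaux_nonneg K hK M _ a
  · intro N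
    exact gaux_sum K hK M M N N.ne_zero (by omega)
  · intro N a h
    exact gaux_support K M N a h
  · intro N a h
    have := gaux_compat K M N a h
    have h2 := mul_nonneg (gaux_nonneg K hK M (M - ((N : ℕ) + 1)) ((N : ℕ) + 1))
      (Ccoef_nonneg_aux K hK N a)
    simp only [PNat.add_coe, PNat.one_coe]
    linarith
  · intro N a h
    simp only [PNat.add_coe, PNat.one_coe]
    exact gaux_compat K M N a h
  · intro N h a
    exact gaux_zero_of K M N h a
  · rintro ν ⟨⟨⟨_, _, h3, _⟩, hc⟩, hd⟩
    have key : ∀ d : ℕ, ∀ N : ℕ+, M ≤ (N : ℕ) + d → ∀ a, ν N a = gaux K M (M - (N : ℕ)) a := by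
      intro d
      induction d with
      | zero =>
        intro N h a
        rw [hd N h, gaux_zero_of K M N h]
      | succ d ih =>
        intro N h a
        have ih' := ih (N + 1) (by simp only [PNat.add_coe, PNat.one_coe]; omega)
        simp only [PNat.add_coe, PNat.one_coe] at ih'
        rcases Nat.lt_or_ge (N : ℕ) a with h' | h'
        · rw [h3 N a h', gaux_support K M N a h']
        · rw [hc N a h', gaux_compat K M N a h', ih', ih']
    funext N a
    exact key M N (by omega) a
end

section
/- For every virtual transition matrix K ∈ 𝓚 and every M ∈ ℕ₀, the virtual distribution δ_M^K is an extreme point of the convex set 𝓓₁(K); that is, the set of extreme points of 𝓓₁(K) contains {δ_M^K : M ∈ ℕ₀}. -/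
/-- For every virtual transition matrix K and every M ∈ ℕ₀, the virtual distribution
δ_M^K (the unique element of 𝓓₁(K) which is the point mass at M at every level N ≥ M)
is an extreme point of 𝓓₁(K). -/
theorem deltaK_extremePoint (K : ℕ+ → ℕ → ℕ → ℝ) (hK : MemVTM K) (M : ℕ)
    (ν : ℕ+ → ℕ → ℝ) (hν : ν ∈ D1K K)
    (hδ : ∀ N : ℕ+, M ≤ (N : ℕ) → ∀ a : ℕ, ν N a = if a = M then 1 else 0) :
    ν ∈ Set.extremePoints ℝ (D1K K) := by
  refine mem_extremePoints_iff_left.2 ⟨hν, ?_⟩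
  intro x hx y hy hseg
  obtain ⟨s, t, hs, ht, hst, he⟩ := hseg
  obtain ⟨⟨hx0, hx1, hx2, hx3⟩, hxc⟩ := hx
  obtain ⟨⟨hy0, hy1, hy2, hy3⟩, hyc⟩ := hy
  obtain ⟨⟨hn0, hn1, hn2, hn3⟩, hnc⟩ := hν
  have key : ∀ (d : ℕ) (N : ℕ+), M ≤ (N : ℕ) + d → x N = ν N := by
    intro d
    induction d with
    | zero =>
      intro N hN
      have hN' : M ≤ (N : ℕ) := by simpa using hN
      have hz : ∀ a, a ≠ M → x N a = 0 := by
        intro a ha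
        have h1 : s * x N a + t * y N a = ν N a := by
          have := congrFun (congrFun he N) a
          simpa using this
        rw [hδ N hN' a, if_neg ha] at h1
        have h2 := hx0 N a
        have h3 := mul_nonneg ht.le (hy0 N a)
        have h4 := mul_nonneg hs.le h2
        have h5 : s * x N a = 0 := by linarith
        exact (mul_eq_zero.1 h5).resolve_left hs.ne'
      funext a
      rw [hδ N hN' a]
      split_ifs with h
      · subst h
        rw [← hx1 N]
        symm
        apply Finset.sum_eq_single
        · intro b _ hb
          exact hz b hb
        · intro hb
          exact absurd (Finset.mem_range.2 (by omega)) hb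
      · exact hz a h
    | succ d ih =>
      intro N hN
      have h1 : x (N + 1) = ν (N + 1) := ih (N + 1) (by
        rw [PNat.add_coe, PNat.one_coe]; omega)
      funext a
      by_cases ha : a ≤ (N : ℕ)
      · rw [hxc N a ha, hnc N a ha, h1]
      · rw [hx2 N a (by omega), hn2 N a (by omega)]
  funext N
  exact key M N (by omega)
end

section
/- Let K = (K_N) and K' = (K'_N) be two elements of the virtual Birkhoff polytope 𝓑. Then the set {α ∈ [0,1] : (1−α)K + αK' ∈ 𝓑} equals [0,1] if for every N ∈ ℕ at least one of the following holds: (i) K_{N+1}(N+1,N+1) = 1; (ii) K'_{N+1}(N+1,N+1) = 1; (iii) K_{N+1}(N+1,N+1) < 1, K'_{N+1}(N+1,N+1) < 1, and K_{N+1}(a,N+1)/(1−K_{N+1}(N+1,N+1)) = K'_{N+1}(a,N+1)/(1−K'_{N+1}(N+1,N+1)) for all a ∈ {1,...,N}; (iv) K_{N+1}(N+1,N+1) < 1, K'_{N+1}(N+1,N+1) < 1, and K_{N+1}(N+1,b)/(1−K_{N+1}(N+1,N+1)) = K'_{N+1}(N+1,b)/(1−K'_{N+1}(N+1,N+1)) for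 all b ∈ {1,...,N}. And the set {α ∈ [0,1] : (1−α)K + αK' ∈ 𝓑} equals {0,1} if there is some N ∈ ℕ for which none of (i)–(iv) holds. -/
/-- Membership in ℬ_N: K ∈ 𝒦_N with K(a,0) = 0 for a ∈ {1,...,N} and with doubly
stochastic restriction to {1,...,N} × {1,...,N}. -/
def MemBN (N : ℕ) (K : ℕ → ℕ → ℝ) : Prop :=
  MemKN N K ∧ (∀ a : ℕ, 1 ≤ a → a ≤ N → K a 0 = 0) ∧
  (∀ a : ℕ, 1 ≤ a → a ≤ N → ∑ b ∈ Finset.Icc 1 N, K a b = 1) ∧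
  (∀ b : ℕ, 1 ≤ b → b ≤ N → ∑ a ∈ Finset.Icc 1 N, K a b = 1)

/-- Membership in the virtual Birkhoff polytope 𝓑: virtual transition matrices which are
levelwise doubly stochastic. -/
def MemVB (K : ℕ+ → ℕ → ℕ → ℝ) : Prop :=
  MemVTM K ∧ ∀ N : ℕ+, MemBN N (K N)

/-- The condition, at level N, under which convex combinations of K and K'"'"' remain in the
virtual Birkhoff polytope: (i) ∨ (ii) ∨ (iii) ∨ (iv). -/
def GoodLevel (K K' : ℕ+ → ℕ → ℕ → ℝ) (N : ℕ+) : Prop :=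
  K (N + 1) ((N : ℕ) + 1) ((N : ℕ) + 1) = 1 ∨
  K' (N + 1) ((N : ℕ) + 1) ((N : ℕ) + 1) = 1 ∨
  (K (N + 1) ((N : ℕ) + 1) ((N : ℕ) + 1) < 1 ∧ K' (N + 1) ((N : ℕ) + 1) ((N : ℕ) + 1) < 1 ∧
    ∀ a : ℕ, 1 ≤ a → a ≤ (N : ℕ) →
      K (N + 1) a ((N : ℕ) + 1) / (1 - K (N + 1) ((N : ℕ) + 1) ((N : ℕ) + 1)) =
      K' (N + 1) a ((N : ℕ) + 1) / (1 - K' (N + 1) ((N : ℕ) + 1) ((N : ℕ) + 1))) ∨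
  (K (N + 1) ((N : ℕ) + 1) ((N : ℕ) + 1) < 1 ∧ K' (N + 1) ((N : ℕ) + 1) ((N : ℕ) + 1) < 1 ∧
    ∀ b : ℕ, 1 ≤ b → b ≤ (N : ℕ) →
      K (N + 1) ((N : ℕ) + 1) b / (1 - K (N + 1) ((N : ℕ) + 1) ((N : ℕ) + 1)) =
      K' (N + 1) ((N : ℕ) + 1) b / (1 - K' (N + 1) ((N : ℕ) + 1) ((N : ℕ) + 1)))

lemma vb_col_le (N : ℕ) (M : ℕ → ℕ → ℝ) (h : MemBN (N + 1) M) (a : ℕ) (ha : 1 ≤ a) (haN : a ≤ N) :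
    M a (N + 1) + M (N + 1) (N + 1) ≤ 1 := by
  have h1 := h.2.2.2 (N + 1) (by omega) le_rfl
  have h0 := h.1.1.1
  rw [Finset.sum_Icc_succ_top (by omega)] at h1
  have := Finset.single_le_sum (f := fun i => M i (N + 1)) (s := Finset.Icc 1 N)
    (fun i _ => h0 i (N + 1)) (Finset.mem_Icc.2 ⟨ha, haN⟩)
  linarith

lemma vb_row_le (N : ℕ) (M : ℕ → ℕ → ℝ) (h : MemBN (N + 1) M) (b : ℕ) (hbN : b ≤ N) :
    M (N + 1) b + M (N + 1) (N + 1) ≤ 1 := by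
  have h0 := h.1.1.1
  have h2 := sum_le_hasSum {b, N + 1} (fun i _ => h0 (N + 1) i) (h.1.1.2 (N + 1))
  rwa [Finset.sum_pair (by omega)] at h2

lemma vb_le (N : ℕ) (M : ℕ → ℕ → ℝ) (h : MemBN (N + 1) M) :
    M (N + 1) (N + 1) ≤ 1 := by
  have := vb_row_le N M h 0 (by omega)
  have := h.1.1.1 (N + 1) 0
  linarith

lemma vb_proj (N : ℕ) (M : ℕ → ℕ → ℝ) (h : MemBN (N + 1) M) (a b : ℕ) (ha : 1 ≤ a) (haN : a ≤ N)
    (hb : b ≤ N) :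
    projK N M a b = M a b + M a (N + 1) * M (N + 1) b / (1 - M (N + 1) (N + 1)) := by
  unfold projK
  rw [if_pos ⟨ha, haN⟩, if_pos hb]
  split_ifs with h1 h2
  · rfl
  · have := vb_col_le N M h a ha haN
    have := h.1.1.1 a (N + 1)
    have h0 : M a (N + 1) = 0 := by linarith
    subst h2
    simp [h0]
  · have := vb_col_le N M h a ha haN
    have := h.1.1.1 a (N + 1)
    have h0 : M a (N + 1) = 0 := by linarith
    simp [h0]

lemma vb_comb (N : ℕ) (M M' : ℕ → ℕ → ℝ) (h : MemBN N M) (h' : MemBN N M') (α : ℝ)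
    (h0 : 0 ≤ α) (h1 : α ≤ 1) : MemBN N (fun a b => (1 - α) * M a b + α * M' a b) := by
  refine ⟨⟨⟨fun a b => ?_, fun a => ?_⟩, fun a ha => ?_⟩, fun a ha haN => ?_, fun a ha haN => ?_,
    fun a ha haN => ?_⟩
  · have := mul_nonneg (sub_nonneg.2 h1) (h.1.1.1 a b)
    have := mul_nonneg h0 (h'.1.1.1 a b)
    simp only
    linarith
  · have := ((h.1.1.2 a).mul_left (1 - α)).add ((h'.1.1.2 a).mul_left α)
    simpa using this
  · simp only [h.1.2 a ha, h'.1.2 a ha]; ring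
  · simp only [h.2.1 a ha haN, h'.2.1 a ha haN]; ring
  · simp only [Finset.sum_add_distrib, ← Finset.mul_sum, h.2.2.1 a ha haN, h'.2.2.1 a ha haN]; ring
  · simp only [Finset.sum_add_distrib, ← Finset.mul_sum, h.2.2.2 a ha haN, h'.2.2.2 a ha haN]; ring

lemma vb_good (N : ℕ+) (K K' : ℕ+ → ℕ → ℕ → ℝ) (hK : MemVB K) (hK' : MemVB K')
    (hg : GoodLevel K K' N) (α : ℝ) (h0 : 0 ≤ α) (h1 : α ≤ 1) :
    projK N (fun a b => (1 - α) * K (N + 1) a b + α * K' (N + 1) a b) =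
      fun a b => (1 - α) * K N a b + α * K' N a b := by
  have hB : MemBN ((N : ℕ) + 1) (K (N + 1)) := hK.2 (N + 1)
  have hB' : MemBN ((N : ℕ) + 1) (K' (N + 1)) := hK'.2 (N + 1)
  have hC := vb_comb _ _ _ hB hB' α h0 h1
  funext a b
  rw [← hK.1.2 N, ← hK'.1.2 N]
  by_cases ha : 1 ≤ a ∧ a ≤ (N : ℕ)
  swap
  · simp only [projK, if_neg ha]; ring
  by_cases hb : b ≤ (N : ℕ)
  swap
  · simp only [projK, if_pos ha, if_neg hb]; ring
  rw [vb_proj _ _ hC a b ha.1 ha.2 hb, vb_proj _ _ hB a b ha.1 ha.2 hb,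
    vb_proj _ _ hB' a b ha.1 ha.2 hb]
  have c1 := vb_col_le _ _ hB a ha.1 ha.2
  have c2 := vb_col_le _ _ hB' a ha.1 ha.2
  have r1 := vb_row_le _ _ hB b hb
  have r2 := vb_row_le _ _ hB' b hb
  have c3 := hB.1.1.1 a (N + 1)
  have c4 := hB'.1.1.1 a (N + 1)
  have r3 := hB.1.1.1 (N + 1) b
  have r4 := hB'.1.1.1 (N + 1) b
  have z1 := hB.2.1 (N + 1) (by omega) le_rfl
  have z2 := hB'.2.1 (N + 1) (by omega) le_rfl
  unfold GoodLevel at hg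
  have hg2 : K (N + 1) ((N : ℕ) + 1) ((N : ℕ) + 1) = 1 ∨
    K' (N + 1) ((N : ℕ) + 1) ((N : ℕ) + 1) = 1 ∨
    (K (N + 1) ((N : ℕ) + 1) ((N : ℕ) + 1) < 1 ∧ K' (N + 1) ((N : ℕ) + 1) ((N : ℕ) + 1) < 1 ∧
      K (N + 1) a ((N : ℕ) + 1) / (1 - K (N + 1) ((N : ℕ) + 1) ((N : ℕ) + 1)) =
      K' (N + 1) a ((N : ℕ) + 1) / (1 - K' (N + 1) ((N : ℕ) + 1) ((N : ℕ) + 1))) ∨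
    (K (N + 1) ((N : ℕ) + 1) ((N : ℕ) + 1) < 1 ∧ K' (N + 1) ((N : ℕ) + 1) ((N : ℕ) + 1) < 1 ∧
      K (N + 1) ((N : ℕ) + 1) b / (1 - K (N + 1) ((N : ℕ) + 1) ((N : ℕ) + 1)) =
      K' (N + 1) ((N : ℕ) + 1) b / (1 - K' (N + 1) ((N : ℕ) + 1) ((N : ℕ) + 1))) := by
    rcases hg with h | h | ⟨h, h2, h3⟩ | ⟨h, h2, h3⟩
    · exact Or.inl h
    · exact Or.inr (Or.inl h)
    · exact Or.inr (Or.inr (Or.inl ⟨h, h2, h3 a ha.1 ha.2⟩))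
    · refine Or.inr (Or.inr (Or.inr ⟨h, h2, ?_⟩))
      rcases Nat.eq_zero_or_pos b with hb0 | hb0
      · subst hb0; rw [z1, z2]; simp
      · exact h3 b hb0 hb
  clear hg hC
  try simp only
  generalize K (N + 1) ((N : ℕ) + 1) ((N : ℕ) + 1) = k at *
  generalize K' (N + 1) ((N : ℕ) + 1) ((N : ℕ) + 1) = k' at *
  generalize K (N + 1) ((N : ℕ) + 1) b = r at *
  generalize K' (N + 1) ((N : ℕ) + 1) b = r' at *
  generalize K (N + 1) a ((N : ℕ) + 1) = c at *
  generalize K' (N + 1) a ((N : ℕ) + 1) = c' at *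
  suffices hs : ((1 - α) * c + α * c') * ((1 - α) * r + α * r') / (1 - ((1 - α) * k + α * k')) =
      (1 - α) * (c * r / (1 - k)) + α * (c' * r' / (1 - k')) by
    rw [hs]; ring
  have key : ∀ (x : ℝ), k < 1 → k' < 1 → 1 - ((1 - α) * k + α * k') ≠ 0 := by
    intro _ hk hk'
    have : 0 < 1 - ((1 - α) * k + α * k') := by
      rcases h0.eq_or_lt with h | h
      · subst h; linarith
      · nlinarith [mul_nonneg (sub_nonneg.2 h1) (sub_pos.2 hk).le, mul_pos h (sub_pos.2 hk')]
    exact this.ne'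
  rcases hg2 with h | h | ⟨hk, hk', h⟩ | ⟨hk, hk', h⟩
  · have e1 : c = 0 := by linarith
    have e2 : r = 0 := by linarith
    subst h e1 e2
    rw [show 1 - ((1 - α) * 1 + α * k') = α * (1 - k') by ring]
    rcases h0.eq_or_lt with h | h
    · subst h; simp
    by_cases hk : 1 - k' = 0
    · simp [hk]
    · field_simp; ring
  · have e1 : c' = 0 := by linarith
    have e2 : r' = 0 := by linarith
    subst h e1 e2
    rw [show 1 - ((1 - α) * k + α * 1) = (1 - α) * (1 - k) by ring]
    rcases h1.eq_or_lt with h | h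
    · subst h; simp
    have : 1 - α ≠ 0 := by linarith
    by_cases hk : 1 - k = 0
    · simp [hk]
    · field_simp; ring
  · have hd := key 0 hk hk'
    have d1 : 1 - k ≠ 0 := by linarith
    have d2 : 1 - k' ≠ 0 := by linarith
    obtain ⟨u, hu⟩ : ∃ u, u = c / (1 - k) := ⟨_, rfl⟩
    have e1 : c = u * (1 - k) := by rw [hu]; field_simp
    have e2 : c' = u * (1 - k') := by rw [hu, h]; field_simp
    clear h hu
    subst e1 e2
    rw [div_eq_iff hd]
    field_simp
    ring
  · have hd := key 0 hk hk'
    have d1 : 1 - k ≠ 0 := by linarith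
    have d2 : 1 - k' ≠ 0 := by linarith
    obtain ⟨u, hu⟩ : ∃ u, u = r / (1 - k) := ⟨_, rfl⟩
    have e1 : r = u * (1 - k) := by rw [hu]; field_simp
    have e2 : r' = u * (1 - k') := by rw [hu, h]; field_simp
    clear h hu
    subst e1 e2
    rw [div_eq_iff hd]
    field_simp
    ring

lemma vb_bad (N : ℕ+) (K K' : ℕ+ → ℕ → ℕ → ℝ) (hK : MemVB K) (hK' : MemVB K')
    (hg : ¬ GoodLevel K K' N) (α : ℝ) (h0 : 0 < α) (h1 : α < 1)
    (hp : projK N (fun a b => (1 - α) * K (N + 1) a b + α * K' (N + 1) a b) =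
      fun a b => (1 - α) * K N a b + α * K' N a b) : False := by
  have hB : MemBN ((N : ℕ) + 1) (K (N + 1)) := hK.2 (N + 1)
  have hB' : MemBN ((N : ℕ) + 1) (K' (N + 1)) := hK'.2 (N + 1)
  have hC := vb_comb _ _ _ hB hB' α h0.le h1.le
  unfold GoodLevel at hg
  push Not at hg
  obtain ⟨g1, g2, g3, g4⟩ := hg
  have k1 := lt_of_le_of_ne (vb_le _ _ hB) g1
  have k2 := lt_of_le_of_ne (vb_le _ _ hB') g2
  obtain ⟨a, ha, haN, hne⟩ := g3 k1 k2
  obtain ⟨b, hb, hbN, hne'⟩ := g4 k1 k2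
  have hp := congrFun (congrFun hp a) b
  rw [← hK.1.2 N, ← hK'.1.2 N, vb_proj _ _ hC a b ha haN hbN, vb_proj _ _ hB a b ha haN hbN,
    vb_proj _ _ hB' a b ha haN hbN] at hp
  clear g1 g2 g3 g4 hB hB' hC hK hK'
  try simp only at hp
  generalize K (N + 1) ((N : ℕ) + 1) ((N : ℕ) + 1) = k at *
  generalize K' (N + 1) ((N : ℕ) + 1) ((N : ℕ) + 1) = k' at *
  generalize K (N + 1) ((N : ℕ) + 1) b = r at *
  generalize K' (N + 1) ((N : ℕ) + 1) b = r' at *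
  generalize K (N + 1) a ((N : ℕ) + 1) = c at *
  generalize K' (N + 1) a ((N : ℕ) + 1) = c' at *
  have hs : ((1 - α) * c + α * c') * ((1 - α) * r + α * r') / (1 - ((1 - α) * k + α * k')) =
      (1 - α) * (c * r / (1 - k)) + α * (c' * r' / (1 - k')) := by linarith
  have q1 : 0 < 1 - k := by linarith
  have q2 : 0 < 1 - k' := by linarith
  have q3 : 0 < 1 - α := by linarith
  have hd : 1 - ((1 - α) * k + α * k') ≠ 0 := by
    have : 0 < 1 - ((1 - α) * k + α * k') := by
      nlinarith [mul_pos q3 q1, mul_pos h0 q2]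
    exact this.ne'
  rw [div_eq_iff hd] at hs
  obtain ⟨u, hu⟩ : ∃ u, u = c / (1 - k) := ⟨_, rfl⟩
  obtain ⟨u', hu'⟩ : ∃ u, u = c' / (1 - k') := ⟨_, rfl⟩
  obtain ⟨v, hv⟩ : ∃ u, u = r / (1 - k) := ⟨_, rfl⟩
  obtain ⟨v', hv'⟩ : ∃ u, u = r' / (1 - k') := ⟨_, rfl⟩
  rw [← hu, ← hu'] at hne
  rw [← hv, ← hv'] at hne'
  have e1 : c = u * (1 - k) := by rw [hu]; field_simp
  have e2 : c' = u' * (1 - k') := by rw [hu']; field_simp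
  have e3 : r = v * (1 - k) := by rw [hv]; field_simp
  have e4 : r' = v' * (1 - k') := by rw [hv']; field_simp
  rw [mul_div_assoc, mul_div_assoc, ← hv, ← hv', e1, e2, e3, e4] at hs
  have : ((1 - α) * (1 - k)) * (α * (1 - k')) * ((u - u') * (v - v')) = 0 := by
    linear_combination -hs
  have hpos : ((1 - α) * (1 - k)) * (α * (1 - k')) ≠ 0 := by positivity
  rcases mul_eq_zero.1 ((mul_eq_zero.1 this).resolve_left hpos) with h | h
  · exact hne (sub_eq_zero.1 h)
  · exact hne' (sub_eq_zero.1 h)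

/-- All-or-nothing convexity of the virtual Birkhoff polytope: for K, K'"'"' ∈ 𝓑, the set of
α ∈ [0,1] with (1−α)K + αK'"'"' ∈ 𝓑 equals [0,1] if every level satisfies one of conditions
(i)–(iv), and equals {0,1} if some level satisfies none of them. -/
theorem virtualBirkhoff_convexity (K K' : ℕ+ → ℕ → ℕ → ℝ)
    (hK : MemVB K) (hK' : MemVB K') :
    ((∀ N : ℕ+, GoodLevel K K' N) →
      {α : ℝ | α ∈ Set.Icc (0 : ℝ) 1 ∧
          MemVB fun N a b => (1 - α) * K N a b + α * K' N a b}
        = Set.Icc (0 : ℝ) 1) ∧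
    ((∃ N : ℕ+, ¬GoodLevel K K' N) →
      {α : ℝ | α ∈ Set.Icc (0 : ℝ) 1 ∧
          MemVB fun N a b => (1 - α) * K N a b + α * K' N a b}
        = {0, 1}) := by
  constructor
  · intro hg
    ext α
    refine ⟨fun h => h.1, fun h => ⟨h, ?_⟩⟩
    have hB : ∀ N : ℕ+, MemBN N (fun a b => (1 - α) * K N a b + α * K' N a b) :=
      fun N => vb_comb _ _ _ (hK.2 N) (hK'.2 N) α h.1 h.2
    exact ⟨⟨fun N => (hB N).1, fun N => vb_good N K K' hK hK' (hg N) α h.1 h.2⟩, hB⟩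
  · rintro ⟨N, hN⟩
    ext α
    constructor
    · rintro ⟨⟨h0, h1⟩, hm⟩
      by_contra hne
      simp only [Set.mem_insert_iff, Set.mem_singleton_iff, not_or] at hne
      exact vb_bad N K K' hK hK' hN α (lt_of_le_of_ne h0 (Ne.symm hne.1))
        (lt_of_le_of_ne h1 hne.2) (hm.1.2 N)
    · rintro (h | h)
      · subst h
        refine ⟨by simp, ?_⟩
        simpa using hK
      · rw [Set.mem_singleton_iff] at h
        subst h
        refine ⟨by simp, ?_⟩
        simpa using hK'
end
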